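/- Let n ≥ 1, s ∈ (0,1), t ∈ (s,1), and p, p* ∈ (1,∞) satisfy s − n/p* = t − n/p. Then there exists C = C(n,s,t,p) > 0 such that for every measurable, almost everywhere finite f : ℝⁿ → ℝ: (1) [f]_{W^{s,p*}(ℝⁿ)} ≤ C [f]_{W^{t,p}(ℝⁿ)}; (2) ( ∫_{ℝⁿ} ( ∫_{ℝⁿ} |f(x)−f(y)|^p / |x−y|^{n+sp} dy )^{p*/p} dx )^{1/p*} ≤ C [f]_{W^{t,p}(ℝⁿ)}; and for every open ball B ⊆ ℝⁿ and every measurable, almost everywhere finite f : B → ℝ, with the same constant C independent of the ball: (3) [f]_{W^{s,p*}(B)} ≤ C [f]_{W^{t,p}(B)}; (4) ( ∫_B ( ∫_B |f(x)−f(y)|^p / |x−y|^{n+sp} dy )^{p*/p} dx )^{1/p*} ≤ C [f]_{W^{t,p}(B)}. All quantities are interpreted in [0,∞] (the inequalities are trivial when the right-hand side is infinite). -/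

import Mathlib

open MeasureTheory
open scoped ENNReal

noncomputable section

/-- Euclidean space `ℝᵏ`. -/
abbrev Euc (k : ℕ) : Type _ := EuclideanSpace ℝ (Fin k)

/-- The Gagliardo seminorm `[f]_{W^{σ,p}(A)}` of a real-valued function, in `[0,∞]`. -/
def gagliardo (n : ℕ) (σ p : ℝ) (A : Set (Euc n)) (f : Euc n → ℝ) : ℝ≥0∞ :=
  (∫⁻ x in A, ∫⁻ y in A,
      ENNReal.ofReal (|f x - f y| ^ p / ‖x - y‖ ^ ((n : ℝ) + σ * p))) ^ (1 / p)

/-- The kernel. -/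
def KK {n : ℕ} (p : ℝ) (f : Euc n → ℝ) (a : ℝ) (x y : Euc n) : ℝ≥0∞ :=
  ENNReal.ofReal (|f x - f y| ^ p / ‖x - y‖ ^ a)

lemma KK_symm {n : ℕ} (p : ℝ) (f : Euc n → ℝ) (a : ℝ) (x y : Euc n) :
    KK p f a x y = KK p f a y x := by
  unfold KK; rw [abs_sub_comm, norm_sub_rev]

lemma KK_meas {n : ℕ} (p : ℝ) (f : Euc n → ℝ) (hf : Measurable f) (a : ℝ) :
    Measurable (fun w : Euc n × Euc n => KK p f a w.1 w.2) := by
  unfold KK; fun_prop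

lemma KK_self {n : ℕ} {p : ℝ} (hp : 0 < p) (f : Euc n → ℝ) (a : ℝ) (x : Euc n) :
    KK p f a x x = 0 := by
  unfold KK; simp [Real.zero_rpow hp.ne']

lemma KK_mono {n : ℕ} {p : ℝ} (hp : 0 < p) (f : Euc n → ℝ) {a b r : ℝ} (hab : a ≤ b)
    {x y : Euc n} (h : ‖x - y‖ ≤ r) :
    KK p f a x y ≤ ENNReal.ofReal (r ^ (b - a)) * KK p f b x y := by
  rcases eq_or_ne x y with rfl | hxy
  · rw [KK_self hp]; exact zero_le
  have hd : 0 < ‖x - y‖ := norm_pos_iff.2 (sub_ne_zero.2 hxy)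
  have hr : 0 < r := hd.trans_le h
  unfold KK
  rw [← ENNReal.ofReal_mul (by positivity)]
  apply ENNReal.ofReal_le_ofReal
  have h1 : ‖x - y‖ ^ (b - a) ≤ r ^ (b - a) := Real.rpow_le_rpow hd.le h (by linarith)
  have h2 : |f x - f y| ^ p / ‖x - y‖ ^ a = ‖x - y‖ ^ (b - a) * (|f x - f y| ^ p / ‖x - y‖ ^ b) := by
    rw [Real.rpow_sub hd]; field_simp
  rw [h2]; gcongr

lemma KK_anti {n : ℕ} {p : ℝ} (f : Euc n → ℝ) {a b r : ℝ} (hab : a ≤ b) (hr : 0 < r)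
    {x y : Euc n} (h : r ≤ ‖x - y‖) :
    KK p f b x y ≤ ENNReal.ofReal (r ^ (a - b)) * KK p f a x y := by
  have hd : 0 < ‖x - y‖ := hr.trans_le h
  unfold KK
  rw [← ENNReal.ofReal_mul (by positivity)]
  apply ENNReal.ofReal_le_ofReal
  have h1 : ‖x - y‖ ^ (a - b) ≤ r ^ (a - b) := Real.rpow_le_rpow_of_nonpos hr h (by linarith)
  have h2 : |f x - f y| ^ p / ‖x - y‖ ^ b = ‖x - y‖ ^ (a - b) * (|f x - f y| ^ p / ‖x - y‖ ^ a) := by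
    rw [Real.rpow_sub hd]; field_simp
  rw [h2]; gcongr

lemma KK_tri {n : ℕ} {p : ℝ} (hp : 0 < p) (f : Euc n → ℝ) (x y z : Euc n) :
    KK p f 0 x y ≤ ENNReal.ofReal (2 ^ p) * (KK p f 0 x z + KK p f 0 z y) := by
  unfold KK
  simp only [Real.rpow_zero, div_one]
  rw [← ENNReal.ofReal_add (by positivity) (by positivity), ← ENNReal.ofReal_mul (by positivity)]
  apply ENNReal.ofReal_le_ofReal
  have h0 : |f x - f y| ≤ |f x - f z| + |f z - f y| := abs_sub_le _ _ _
  rcases le_total |f x - f z| |f z - f y| with h | h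
  · calc |f x - f y| ^ p ≤ (2 * |f z - f y|) ^ p := by gcongr; linarith
      _ = 2 ^ p * |f z - f y| ^ p := Real.mul_rpow (by norm_num) (abs_nonneg _)
      _ ≤ _ := by gcongr; linarith [Real.rpow_nonneg (abs_nonneg (f x - f z)) p]
  · calc |f x - f y| ^ p ≤ (2 * |f x - f z|) ^ p := by gcongr; linarith
      _ = 2 ^ p * |f x - f z| ^ p := Real.mul_rpow (by norm_num) (abs_nonneg _)
      _ ≤ _ := by gcongr; linarith [Real.rpow_nonneg (abs_nonneg (f z - f y)) p]

/-- Volume of the unit ball. -/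
def om (n : ℕ) : ℝ := (volume (Metric.ball (0 : Euc n) 1)).toReal

lemma om_pos (n : ℕ) : 0 < om n :=
  ENNReal.toReal_pos (Metric.measure_ball_pos _ _ one_pos).ne' measure_ball_lt_top.ne

lemma vol_ball (n : ℕ) (x : Euc n) {r : ℝ} (hr : 0 < r) :
    volume (Metric.ball x r) = ENNReal.ofReal (om n * r ^ (n : ℝ)) := by
  rw [Measure.addHaar_ball_of_pos _ _ hr, om, ENNReal.ofReal_mul ENNReal.toReal_nonneg,
    ENNReal.ofReal_toReal measure_ball_lt_top.ne, mul_comm]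
  simp

lemma vol_cball (n : ℕ) (x : Euc n) {r : ℝ} (hr : 0 < r) :
    volume (Metric.closedBall x r) = ENNReal.ofReal (om n * r ^ (n : ℝ)) := by
  rw [Measure.addHaar_closedBall _ _ hr.le, om, ENNReal.ofReal_mul ENNReal.toReal_nonneg,
    ENNReal.ofReal_toReal measure_ball_lt_top.ne, mul_comm]
  simp

/-- The set of intermediate points. -/
def DD {n : ℕ} (x y : Euc n) (l : ℝ) : Set (Euc n) :=
  {z | l / 8 ≤ ‖x - z‖ ∧ ‖x - z‖ < l ∧ l / 8 ≤ ‖y - z‖}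

lemma DD_meas {n : ℕ} (x y : Euc n) (l : ℝ) : MeasurableSet (DD x y l) := by
  have h1 : MeasurableSet {z : Euc n | l / 8 ≤ ‖x - z‖} := measurableSet_le (by fun_prop) (by fun_prop)
  have h2 : MeasurableSet {z : Euc n | ‖x - z‖ < l} := measurableSet_lt (by fun_prop) (by fun_prop)
  have h3 : MeasurableSet {z : Euc n | l / 8 ≤ ‖y - z‖} := measurableSet_le (by fun_prop) (by fun_prop)
  exact h1.inter (h2.inter h3)

lemma dens {n : ℕ} (hn : 1 ≤ n) {c : Euc n} {R : ℝ} (hR : 0 < R) {x : Euc n}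
    (hx : x ∈ Metric.ball c R) (y : Euc n) {l : ℝ} (hl : 0 < l) (hlR : l ≤ 2 * R) :
    ENNReal.ofReal (om n * 4⁻¹ ^ (n : ℝ) * l ^ (n : ℝ)) ≤
      volume (DD x y l ∩ Metric.ball c R) := by
  set w : Euc n := x + (l / (2 * R)) • (c - x) with hw
  have hxc : ‖x - c‖ < R := by simpa [dist_eq_norm] using hx
  have ht0 : 0 ≤ l / (2 * R) := by positivity
  have ht1 : l / (2 * R) ≤ 1 := by rw [div_le_one (by positivity)]; exact hlR
  have htR : l / (2 * R) * R = l / 2 := by field_simp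
  have hwx : ‖w - x‖ ≤ l / 2 := by
    have : w - x = (l / (2 * R)) • (c - x) := by rw [hw]; abel
    rw [this, norm_smul, Real.norm_of_nonneg ht0, norm_sub_rev, ← htR]
    gcongr
  have hwc : ‖w - c‖ ≤ R - l / 2 := by
    have : w - c = (1 - l / (2 * R)) • (x - c) := by
      rw [hw, sub_smul, one_smul, ← neg_sub x c, smul_neg]; abel
    rw [this, norm_smul, Real.norm_of_nonneg (by linarith)]
    calc (1 - l / (2 * R)) * ‖x - c‖ ≤ (1 - l / (2 * R)) * R := by
          gcongr
      _ = _ := by rw [sub_mul, htR]; ring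
  have hsub : Metric.ball w (l / 2) ⊆
      (DD x y l ∩ Metric.ball c R) ∪ (Metric.ball x (l / 8) ∪ Metric.ball y (l / 8)) := by
    intro z hz
    have hz' : ‖z - w‖ < l / 2 := by simpa [dist_eq_norm] using hz
    by_cases h1 : l / 8 ≤ ‖x - z‖
    · by_cases h2 : l / 8 ≤ ‖y - z‖
      · left
        refine ⟨⟨h1, ?_, h2⟩, ?_⟩
        · calc ‖x - z‖ = ‖(z - w) + (w - x)‖ := by rw [norm_sub_rev]; congr 1; abel
            _ ≤ ‖z - w‖ + ‖w - x‖ := norm_add_le _ _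
            _ < l := by linarith
        · rw [Metric.mem_ball, dist_eq_norm]
          calc ‖z - c‖ = ‖(z - w) + (w - c)‖ := by congr 1; abel
            _ ≤ ‖z - w‖ + ‖w - c‖ := norm_add_le _ _
            _ < R := by linarith
      · right; right
        rw [Metric.mem_ball, dist_eq_norm, norm_sub_rev]; linarith
    · right; left
      rw [Metric.mem_ball, dist_eq_norm, norm_sub_rev]; linarith
  have hm := (measure_mono (μ := volume) hsub).trans
    ((measure_union_le _ _).trans (add_le_add le_rfl (measure_union_le _ _)))
  rw [vol_ball n w (by positivity), vol_ball n x (by positivity), vol_ball n y (by positivity)] at hm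
  have ho := om_pos n
  rw [← ENNReal.ofReal_add (by positivity) (by positivity)] at hm
  have hm2 := tsub_le_iff_right.2 hm
  rw [← ENNReal.ofReal_sub _ (by positivity)] at hm2
  refine le_trans (ENNReal.ofReal_le_ofReal ?_) hm2
  have e1 : (l / 2) ^ (n : ℝ) = 2⁻¹ ^ (n : ℝ) * l ^ (n : ℝ) := by
    rw [← Real.mul_rpow (by norm_num) hl.le]; congr 1; ring
  have e2 : (l / 8) ^ (n : ℝ) = 2⁻¹ ^ (n : ℝ) * 4⁻¹ ^ (n : ℝ) * l ^ (n : ℝ) := by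
    rw [← Real.mul_rpow (by norm_num) (by norm_num), ← Real.mul_rpow (by norm_num) hl.le]
    congr 1; ring
  have e3 : (4⁻¹ : ℝ) ^ (n : ℝ) = 2⁻¹ ^ (n : ℝ) * 2⁻¹ ^ (n : ℝ) := by
    rw [← Real.mul_rpow (by norm_num) (by norm_num)]; norm_num
  have e4 : (2⁻¹ : ℝ) ^ (n : ℝ) ≤ 2⁻¹ := by
    have := Real.rpow_le_rpow_of_exponent_ge (x := (2⁻¹ : ℝ)) (by norm_num) (by norm_num)
      (show (1 : ℝ) ≤ n by exact_mod_cast hn)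
    simpa using this
  rw [e1, e2, e3]
  set u := (2⁻¹ : ℝ) ^ (n : ℝ)
  have hu : 0 < u := by positivity
  set L := l ^ (n : ℝ)
  have hL : 0 < L := by positivity
  have : u * u ≤ u - 2 * (u * (u * u)) := by nlinarith
  nlinarith [mul_le_mul_of_nonneg_left this (mul_pos ho hL).le]

lemma KK_meas_right {n : ℕ} (p : ℝ) (f : Euc n → ℝ) (hf : Measurable f) (a : ℝ) (x : Euc n) :
    Measurable (fun z : Euc n => KK p f a x z) := by
  unfold KK; fun_prop

lemma KK_meas_left {n : ℕ} (p : ℝ) (f : Euc n → ℝ) (hf : Measurable f) (a : ℝ) (y : Euc n) :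
    Measurable (fun z : Euc n => KK p f a z y) := by
  unfold KK; fun_prop

lemma avg {n : ℕ} (hn : 1 ≤ n) {p : ℝ} (hp : 0 < p) {f : Euc n → ℝ} (hf : Measurable f)
    {c : Euc n} {R : ℝ} (hR : 0 < R) {x : Euc n}
    (hx : x ∈ Metric.ball c R) (y : Euc n) {l : ℝ} (hl : 0 < l) (hlR : l ≤ 2 * R) :
    KK p f 0 x y ≤ ENNReal.ofReal (2 ^ p * (om n)⁻¹ * 4 ^ (n : ℝ) * l ^ (-(n : ℝ))) *
      ((∫⁻ z in DD x y l ∩ Metric.ball c R, KK p f 0 x z) +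
        ∫⁻ z in DD x y l ∩ Metric.ball c R, KK p f 0 z y) := by
  have ho := om_pos n
  set S := DD x y l ∩ Metric.ball c R
  have h1 : KK p f 0 x y * ENNReal.ofReal (om n * 4⁻¹ ^ (n : ℝ) * l ^ (n : ℝ)) ≤
      ENNReal.ofReal (2 ^ p) * ((∫⁻ z in S, KK p f 0 x z) + ∫⁻ z in S, KK p f 0 z y) := by
    calc _ ≤ KK p f 0 x y * volume S := by gcongr; exact dens hn hR hx y hl hlR
      _ = ∫⁻ z in S, KK p f 0 x y := by simp
      _ ≤ ∫⁻ z in S, ENNReal.ofReal (2 ^ p) * (KK p f 0 x z + KK p f 0 z y) :=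
          lintegral_mono fun z => KK_tri hp f x y z
      _ = _ := by
          rw [lintegral_const_mul' _ _ ENNReal.ofReal_ne_top,
            lintegral_add_left (KK_meas_right p f hf 0 x)]
  have h2 : ENNReal.ofReal (om n * 4⁻¹ ^ (n : ℝ) * l ^ (n : ℝ)) *
      ENNReal.ofReal ((om n)⁻¹ * 4 ^ (n : ℝ) * l ^ (-(n : ℝ))) = 1 := by
    rw [← ENNReal.ofReal_mul (by positivity), Real.rpow_neg hl.le, Real.inv_rpow (by norm_num)]
    rw [← ENNReal.ofReal_one]
    congr 1
    field_simp
  calc KK p f 0 x y = KK p f 0 x y * 1 := by rw [mul_one]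
    _ = (KK p f 0 x y * ENNReal.ofReal (om n * 4⁻¹ ^ (n : ℝ) * l ^ (n : ℝ))) *
      ENNReal.ofReal ((om n)⁻¹ * 4 ^ (n : ℝ) * l ^ (-(n : ℝ))) := by rw [mul_assoc, h2]
    _ ≤ _ := mul_le_mul_left h1 _
    _ = _ := by
      rw [show 2 ^ p * (om n)⁻¹ * 4 ^ (n : ℝ) * l ^ (-(n : ℝ)) =
        2 ^ p * ((om n)⁻¹ * 4 ^ (n : ℝ) * l ^ (-(n : ℝ))) by ring,
        ENNReal.ofReal_mul (p := 2 ^ p) (by positivity)]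
      ring

open Classical in
/-- Auxiliary integral. -/
def JJ {n : ℕ} (p : ℝ) (f : Euc n → ℝ) (a : ℝ) (B : Set (Euc n)) (L : ℝ) (x y : Euc n) : ℝ≥0∞ :=
  ∫⁻ z in B, if ‖x - y‖ ≤ L * ‖x - z‖ then KK p f a x z else 0

lemma JJ_meas {n : ℕ} (p : ℝ) (f : Euc n → ℝ) (hf : Measurable f) (a : ℝ) (B : Set (Euc n))
    (L : ℝ) : Measurable (fun w : Euc n × Euc n => JJ p f a B L w.1 w.2) := by
  unfold JJ
  apply Measurable.lintegral_prod_right' (ν := volume.restrict B)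
    (f := fun w : (Euc n × Euc n) × Euc n =>
      if ‖w.1.1 - w.1.2‖ ≤ L * ‖w.1.1 - w.2‖ then KK p f a w.1.1 w.2 else 0)
  refine Measurable.ite (measurableSet_le (by fun_prop) (by fun_prop)) ?_ measurable_const
  unfold KK; fun_prop

lemma JJ_int {n : ℕ} {p : ℝ} (hp : 0 < p) {f : Euc n → ℝ} (hf : Measurable f) (a : ℝ)
    {B : Set (Euc n)} (L : ℝ) (hL : 0 < L) (r : ℝ) (x : Euc n) :
    ∫⁻ y in {y | r ≤ ‖x - y‖} ∩ B, JJ p f (a + n) B L x y ≤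
      ENNReal.ofReal (om n * L ^ (n : ℝ)) *
        ∫⁻ z in {z | r ≤ L * ‖x - z‖} ∩ B, KK p f a x z := by
  have ho := om_pos n
  unfold JJ
  rw [lintegral_lintegral_swap]
  swap
  · apply Measurable.aemeasurable
    refine Measurable.ite (measurableSet_le (by fun_prop) (by fun_prop)) ?_ measurable_const
    unfold KK; fun_prop
  have hS : MeasurableSet {z : Euc n | r ≤ L * ‖x - z‖} :=
    measurableSet_le (by fun_prop) (by fun_prop)
  rw [← lintegral_const_mul' _ _ ENNReal.ofReal_ne_top, ← setLIntegral_indicator hS]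
  apply lintegral_mono
  intro z
  beta_reduce
  rcases eq_or_ne x z with rfl | hxz
  · simp [KK_self hp]
  have hd : 0 < ‖x - z‖ := norm_pos_iff.2 (sub_ne_zero.2 hxz)
  by_cases hr : r ≤ L * ‖x - z‖
  · rw [Set.indicator_of_mem (by exact hr)]
    have hc : ∀ y : Euc n, (if ‖x - y‖ ≤ L * ‖x - z‖ then KK p f (a + n) x z else 0) ≤
        (Metric.closedBall x (L * ‖x - z‖)).indicator (fun _ => KK p f (a + n) x z) y := by
      intro y
      by_cases h : ‖x - y‖ ≤ L * ‖x - z‖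
      · rw [if_pos h, Set.indicator_of_mem]
        rw [Metric.mem_closedBall, dist_eq_norm, norm_sub_rev]
        exact h
      · rw [if_neg h]; exact zero_le
    calc _ ≤ ∫⁻ y, (Metric.closedBall x (L * ‖x - z‖)).indicator
          (fun _ => KK p f (a + n) x z) y :=
          (setLIntegral_le_lintegral _ _).trans (lintegral_mono hc)
      _ = KK p f (a + n) x z * ENNReal.ofReal (om n * (L * ‖x - z‖) ^ (n : ℝ)) := by
          rw [lintegral_indicator measurableSet_closedBall, setLIntegral_const,
            vol_cball n x (by positivity)]
      _ ≤ ENNReal.ofReal (‖x - z‖ ^ (a - (a + n))) * KK p f a x z *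
            ENNReal.ofReal (om n * (L * ‖x - z‖) ^ (n : ℝ)) := by
          gcongr
          exact KK_anti f (by simp) hd le_rfl
      _ = ENNReal.ofReal (‖x - z‖ ^ (a - (a + n))) *
            ENNReal.ofReal (om n * (L * ‖x - z‖) ^ (n : ℝ)) * KK p f a x z := by ring
      _ = _ := by
          rw [← ENNReal.ofReal_mul (by positivity)]
          congr 2
          rw [Real.mul_rpow hL.le hd.le, show a - (a + n) = -(n : ℝ) by ring, Real.rpow_neg hd.le]
          field_simp
  · rw [Set.indicator_of_notMem (by exact hr)]
    rw [nonpos_iff_eq_zero]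
    have hS' : MeasurableSet {y : Euc n | r ≤ ‖x - y‖} :=
      measurableSet_le (by fun_prop) (by fun_prop)
    rw [← setLIntegral_indicator hS']
    convert lintegral_zero with y
    by_cases hy : r ≤ ‖x - y‖
    · rw [Set.indicator_of_mem (by exact hy), if_neg (by linarith)]
    · rw [Set.indicator_of_notMem (by exact hy)]

/-- Constant. -/
def cA (n : ℕ) (p : ℝ) : ℝ := 2 ^ p * (om n)⁻¹ * 4 ^ (n : ℝ)

lemma cA_pos (n : ℕ) (p : ℝ) : 0 < cA n p := by
  have := om_pos n
  unfold cA; positivity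

lemma ptB {n : ℕ} (hn : 1 ≤ n) {p : ℝ} (hp : 0 < p) {f : Euc n → ℝ} (hf : Measurable f)
    {c : Euc n} {R : ℝ} (hR : 0 < R) {x y : Euc n}
    (hx : x ∈ Metric.ball c R) (hy : y ∈ Metric.ball c R) {a b r M : ℝ} (ha : 0 ≤ a) (hb : 0 ≤ b)
    (hab : b ≤ a + n) (hr : 0 < r) (hrd : r ≤ ‖x - y‖) (hM : 1 ≤ M) :
    KK p f a x y ≤
      ENNReal.ofReal (cA n p * M ^ (-a)) * JJ p f (a + n) (Metric.ball c R) (8 * M) x y +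
      ENNReal.ofReal (cA n p * M ^ (n : ℝ) * 2 ^ b * r ^ (b - a - n)) *
        ∫⁻ z in Metric.ball c R, KK p f b y z := by
  have hA := cA_pos n p
  have hM0 : 0 < M := by linarith
  set ρ := ‖x - y‖ with hρ
  have hρ0 : 0 < ρ := hr.trans_le hrd
  set l := ρ / M with hl
  have hl0 : 0 < l := by positivity
  have hlρ : l ≤ ρ := div_le_self hρ0.le hM
  have hρR : ρ ≤ 2 * R := by
    rw [hρ, ← dist_eq_norm]
    have := dist_triangle_right x y c
    rw [Metric.mem_ball] at hx hy
    linarith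
  set B := Metric.ball c R
  have hB : MeasurableSet B := measurableSet_ball
  have hS : MeasurableSet (DD x y l ∩ B) := (DD_meas x y l).inter hB
  have h1 : ∫⁻ z in DD x y l ∩ B, KK p f 0 x z ≤
      ENNReal.ofReal (l ^ (a + n)) * JJ p f (a + n) B (8 * M) x y := by
    unfold JJ
    rw [← setLIntegral_indicator (DD_meas x y l), ← lintegral_const_mul' _ _ ENNReal.ofReal_ne_top]
    apply lintegral_mono
    intro z
    by_cases hz : z ∈ DD x y l
    · rw [Set.indicator_of_mem hz]
      have h3 : ρ ≤ 8 * M * ‖x - z‖ := by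
        have := hz.1
        rw [hl, div_div, div_le_iff₀ (by positivity)] at this
        linarith
      beta_reduce
      rw [if_pos h3]
      have := KK_mono (n := n) (p := p) hp f (a := 0) (b := a + n) (by positivity) hz.2.1.le
      simpa using this
    · rw [Set.indicator_of_notMem hz]; exact zero_le
  have h2 : ∫⁻ z in DD x y l ∩ B, KK p f 0 z y ≤
      ENNReal.ofReal ((2 * ρ) ^ b) * ∫⁻ z in B, KK p f b y z := by
    rw [← lintegral_const_mul' _ _ ENNReal.ofReal_ne_top]
    refine (setLIntegral_mono' hS ?_).trans (lintegral_mono_set Set.inter_subset_right)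
    intro z hz
    have h3 : ‖z - y‖ ≤ 2 * ρ := by
      calc ‖z - y‖ = ‖(x - y) - (x - z)‖ := by congr 1; abel
        _ ≤ ρ + ‖x - z‖ := norm_sub_le _ _
        _ ≤ 2 * ρ := by linarith [hz.1.2.1]
    rw [KK_symm p f b y z]
    simpa using KK_mono hp f (a := 0) (b := b) hb h3
  calc KK p f a x y ≤ ENNReal.ofReal (ρ ^ (0 - a)) * KK p f 0 x y := KK_anti f ha hρ0 le_rfl
    _ ≤ ENNReal.ofReal (ρ ^ (0 - a)) * (ENNReal.ofReal (cA n p * l ^ (-(n : ℝ))) *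
      (ENNReal.ofReal (l ^ (a + n)) * JJ p f (a + n) B (8 * M) x y +
        ENNReal.ofReal ((2 * ρ) ^ b) * ∫⁻ z in B, KK p f b y z)) := by
        gcongr
        exact (avg hn hp hf hR hx y hl0 (hlρ.trans hρR)).trans (by unfold cA; gcongr)
    _ = ENNReal.ofReal (ρ ^ (0 - a) * (cA n p * l ^ (-(n : ℝ))) * l ^ (a + n)) *
          JJ p f (a + n) B (8 * M) x y +
        ENNReal.ofReal (ρ ^ (0 - a) * (cA n p * l ^ (-(n : ℝ))) * (2 * ρ) ^ b) *
          ∫⁻ z in B, KK p f b y z := by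
        rw [ENNReal.ofReal_mul (p := ρ ^ (0 - a) * (cA n p * l ^ (-(n : ℝ)))) (by positivity),
          ENNReal.ofReal_mul (p := ρ ^ (0 - a) * (cA n p * l ^ (-(n : ℝ)))) (by positivity),
          ENNReal.ofReal_mul (p := ρ ^ (0 - a)) (by positivity)]
        ring
    _ ≤ _ := by
        have e1 : l ^ (-(n : ℝ)) * l ^ (a + n) = l ^ a := by
          rw [← Real.rpow_add hl0]; congr 1; ring
        have e2 : l ^ a = ρ ^ a * M ^ (-a) := by
          rw [hl, Real.div_rpow hρ0.le hM0.le, Real.rpow_neg hM0.le]; rfl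
        have e3 : l ^ (-(n : ℝ)) = ρ ^ (-(n : ℝ)) * M ^ (n : ℝ) := by
          rw [hl, Real.div_rpow hρ0.le hM0.le, Real.rpow_neg hM0.le]; field_simp
        have e4 : ρ ^ (0 - a) * ρ ^ a = 1 := by
          rw [← Real.rpow_add hρ0]; simp
        have e5 : ρ ^ (0 - a) * ρ ^ (-(n : ℝ)) * ρ ^ b = ρ ^ (b - a - n) := by
          rw [← Real.rpow_add hρ0, ← Real.rpow_add hρ0]; congr 1; ring
        have e6 : ρ ^ (b - a - n) ≤ r ^ (b - a - n) :=
          Real.rpow_le_rpow_of_nonpos hr hrd (by linarith)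
        gcongr ENNReal.ofReal ?_ * _ + ENNReal.ofReal ?_ * _
        · apply le_of_eq
          calc _ = ρ ^ (0 - a) * cA n p * (l ^ (-(n : ℝ)) * l ^ (a + n)) := by ring
            _ = (ρ ^ (0 - a) * ρ ^ a) * cA n p * M ^ (-a) := by rw [e1, e2]; ring
            _ = _ := by rw [e4]; ring
        · rw [e3, Real.mul_rpow (by norm_num) hρ0.le]
          calc _ = cA n p * M ^ (n : ℝ) * 2 ^ b * (ρ ^ (0 - a) * ρ ^ (-(n : ℝ)) * ρ ^ b) := by ring
            _ ≤ _ := by rw [e5]; gcongr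

lemma KK_cmp {n : ℕ} {p : ℝ} (hp : 0 < p) {f : Euc n → ℝ}
    {c : Euc n} {R : ℝ} {x : Euc n} (hx : x ∈ Metric.ball c R) {a b : ℝ} (hab : a ≤ b) :
    ∫⁻ y in Metric.ball c R, KK p f a x y ≤
      ENNReal.ofReal ((2 * R) ^ (b - a)) * ∫⁻ y in Metric.ball c R, KK p f b x y := by
  rw [← lintegral_const_mul' _ _ ENNReal.ofReal_ne_top]
  refine setLIntegral_mono' measurableSet_ball fun y hy => KK_mono hp f hab ?_
  rw [← dist_eq_norm]
  have := dist_triangle_right x y c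
  rw [Metric.mem_ball] at hx hy
  linarith

lemma stepC {n : ℕ} (hn : 1 ≤ n) {p : ℝ} (hp : 0 < p) {f : Euc n → ℝ} (hf : Measurable f)
    {c : Euc n} {R : ℝ} (hR : 0 < R) {x : Euc n}
    (hx : x ∈ Metric.ball c R) {a b r M : ℝ} (ha : 0 ≤ a) (hab' : a ≤ b)
    (hab : b ≤ a + n) (hr : 0 < r) (hM : 1 ≤ M)
    (hθ : cA n p * M ^ (-a) * (om n * (8 * M) ^ (n : ℝ)) ≤ 1 / 2)
    (hg : ∫⁻ y in Metric.ball c R, KK p f b x y ≠ ⊤) :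
    ∫⁻ y in Metric.ball c R, KK p f a x y ≤
      ENNReal.ofReal (2 + 2 * (cA n p * M ^ (n : ℝ) * 2 ^ b)) *
      (ENNReal.ofReal (r ^ (b - a)) * (∫⁻ y in Metric.ball c R, KK p f b x y) +
        ENNReal.ofReal (r ^ (b - a - n)) *
        ∫⁻ y in Metric.ball c R, ∫⁻ z in Metric.ball c R, KK p f b y z) := by
  have hA := cA_pos n p
  have ho := om_pos n
  have hM0 : 0 < M := by linarith
  set B := Metric.ball c R with hBdef
  have hB : MeasurableSet B := measurableSet_ball
  set H := ∫⁻ y in B, KK p f a x y with hH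
  set g := ∫⁻ y in B, KK p f b x y with hgdef
  set G := ∫⁻ y in B, ∫⁻ z in B, KK p f b y z with hG
  have hHtop : H ≠ ⊤ := ne_top_of_le_ne_top (ENNReal.mul_ne_top ENNReal.ofReal_ne_top hg)
    (KK_cmp hp hx hab')
  set S : Set (Euc n) := {y | r ≤ ‖x - y‖} with hSdef
  have hS : MeasurableSet S := measurableSet_le (by fun_prop) (by fun_prop)
  set k2 := cA n p * M ^ (n : ℝ) * 2 ^ b with hk2
  have hk2pos : 0 < k2 := by positivity
  have hI : ∫⁻ y in S ∩ B, KK p f a x y ≤ H / 2 + ENNReal.ofReal (k2 * r ^ (b - a - n)) * G := by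
    calc ∫⁻ y in S ∩ B, KK p f a x y
        ≤ ∫⁻ y in S ∩ B, (ENNReal.ofReal (cA n p * M ^ (-a)) * JJ p f (a + n) B (8 * M) x y +
          ENNReal.ofReal (k2 * r ^ (b - a - n)) * ∫⁻ z in B, KK p f b y z) := by
          refine setLIntegral_mono' (hS.inter hB) fun y hy => ?_
          exact ptB hn hp hf hR hx hy.2 ha (ha.trans hab') hab hr hy.1 hM
      _ = ENNReal.ofReal (cA n p * M ^ (-a)) * (∫⁻ y in S ∩ B, JJ p f (a + n) B (8 * M) x y) +
          ENNReal.ofReal (k2 * r ^ (b - a - n)) * ∫⁻ y in S ∩ B, ∫⁻ z in B, KK p f b y z := by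
          rw [lintegral_add_left, lintegral_const_mul' _ _ ENNReal.ofReal_ne_top,
            lintegral_const_mul' _ _ ENNReal.ofReal_ne_top]
          exact ((JJ_meas p f hf (a + n) B (8 * M)).comp measurable_prodMk_left).const_mul _
      _ ≤ ENNReal.ofReal (cA n p * M ^ (-a)) * (ENNReal.ofReal (om n * (8 * M) ^ (n : ℝ)) * H) +
          ENNReal.ofReal (k2 * r ^ (b - a - n)) * G := by
          gcongr
          · refine (JJ_int hp hf a (8 * M) (by positivity) r x).trans ?_
            gcongr
            exact lintegral_mono_set Set.inter_subset_right
          · exact lintegral_mono_set Set.inter_subset_right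
      _ ≤ _ := by
          gcongr
          rw [← mul_assoc, ← ENNReal.ofReal_mul (by positivity), ENNReal.div_eq_inv_mul]
          gcongr
          calc _ ≤ ENNReal.ofReal (1 / 2) := ENNReal.ofReal_le_ofReal hθ
            _ = 2⁻¹ := by rw [one_div, ENNReal.ofReal_inv_of_pos (by norm_num)]; simp
  have hI2 : ∫⁻ y in B \ S, KK p f a x y ≤ ENNReal.ofReal (r ^ (b - a)) * g := by
    rw [hgdef, ← lintegral_const_mul' _ _ ENNReal.ofReal_ne_top]
    refine (setLIntegral_mono' (hB.diff hS) fun y hy => ?_).trans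
      (lintegral_mono_set Set.sdiff_subset)
    exact KK_mono hp f hab' (not_le.1 hy.2).le
  have hsplit : H = (∫⁻ y in B ∩ S, KK p f a x y) + ∫⁻ y in B \ S, KK p f a x y :=
    (lintegral_inter_add_sdiff _ _ hS).symm
  rw [Set.inter_comm] at hI
  have h1 : H ≤ H / 2 + (ENNReal.ofReal (k2 * r ^ (b - a - n)) * G +
      ENNReal.ofReal (r ^ (b - a)) * g) := by
    calc H = _ := hsplit
      _ ≤ _ := add_le_add hI hI2
      _ = _ := by ring
  have h2 : H / 2 ≤ ENNReal.ofReal (k2 * r ^ (b - a - n)) * G + ENNReal.ofReal (r ^ (b - a)) * g := by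
    have := tsub_le_iff_left.2 h1
    rwa [ENNReal.sub_half hHtop] at this
  rw [ENNReal.div_le_iff' (by norm_num) (by norm_num)] at h2
  refine h2.trans ?_
  have q1 : 0 < r ^ (b - a) := by positivity
  have q2 : 0 < r ^ (b - a - n) := by positivity
  have e1 : 2 * ENNReal.ofReal (k2 * r ^ (b - a - n)) ≤
      ENNReal.ofReal (2 + 2 * k2) * ENNReal.ofReal (r ^ (b - a - n)) := by
    rw [show (2 : ℝ≥0∞) = ENNReal.ofReal 2 by simp, ← ENNReal.ofReal_mul (by norm_num),
      ← ENNReal.ofReal_mul (by positivity)]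
    apply ENNReal.ofReal_le_ofReal
    nlinarith
  have e2 : 2 * ENNReal.ofReal (r ^ (b - a)) ≤
      ENNReal.ofReal (2 + 2 * k2) * ENNReal.ofReal (r ^ (b - a)) := by
    rw [show (2 : ℝ≥0∞) = ENNReal.ofReal 2 by simp, ← ENNReal.ofReal_mul (by norm_num),
      ← ENNReal.ofReal_mul (by positivity)]
    apply ENNReal.ofReal_le_ofReal
    nlinarith
  change _ ≤ ENNReal.ofReal (2 + 2 * k2) * _
  generalize ENNReal.ofReal (2 + 2 * k2) = K at *
  generalize ENNReal.ofReal (k2 * r ^ (b - a - n)) = X1 at *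
  generalize ENNReal.ofReal (r ^ (b - a - n)) = X2 at *
  generalize ENNReal.ofReal (r ^ (b - a)) = X3 at *
  calc 2 * (X1 * G + X3 * g) = (2 * X1) * G + (2 * X3) * g := by ring
    _ ≤ (K * X2) * G + (K * X3) * g := add_le_add (mul_le_mul_left e1 _) (mul_le_mul_left e2 _)
    _ = _ := by ring

lemma opt {H g G : ℝ≥0∞} {C E N : ℝ} (hC : 0 < C) (hE : 0 < E) (hEN : E < N)
    (hg0 : g ≠ 0) (hg : g ≠ ⊤) (hG0 : G ≠ 0) (hG : G ≠ ⊤)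
    (h : ∀ r : ℝ, 0 < r → H ≤ ENNReal.ofReal C *
      (ENNReal.ofReal (r ^ E) * g + ENNReal.ofReal (r ^ (E - N)) * G)) :
    H ^ (N / (N - E)) ≤ ENNReal.ofReal ((2 * C) ^ (N / (N - E))) * G ^ (N / (N - E) - 1) * g := by
  have hN : 0 < N := hE.trans hEN
  have hNE : 0 < N - E := by linarith
  set q := N / (N - E) with hq
  have hq0 : 0 < q := by positivity
  obtain ⟨u, hu, rfl⟩ : ∃ u : ℝ, 0 < u ∧ g = ENNReal.ofReal u :=
    ⟨g.toReal, ENNReal.toReal_pos hg0 hg, (ENNReal.ofReal_toReal hg).symm⟩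
  obtain ⟨v, hv, rfl⟩ : ∃ v : ℝ, 0 < v ∧ G = ENNReal.ofReal v :=
    ⟨G.toReal, ENNReal.toReal_pos hG0 hG, (ENNReal.ofReal_toReal hG).symm⟩
  have hr : 0 < (v / u) ^ (1 / N) := by positivity
  have h1 := h _ hr
  rw [← ENNReal.ofReal_mul (by positivity), ← ENNReal.ofReal_mul (by positivity),
    ← ENNReal.ofReal_add (by positivity) (by positivity), ← ENNReal.ofReal_mul hC.le] at h1
  have e1 : ((v / u) ^ (1 / N)) ^ E * u = v ^ (E / N) * u ^ (1 - E / N) := by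
    rw [← Real.rpow_mul (by positivity), Real.div_rpow hv.le hu.le, Real.rpow_sub hu, Real.rpow_one,
      show 1 / N * E = E / N by ring]
    field_simp
  have e2 : ((v / u) ^ (1 / N)) ^ (E - N) * v = v ^ (E / N) * u ^ (1 - E / N) := by
    rw [← Real.rpow_mul (by positivity), show 1 / N * (E - N) = E / N - 1 by field_simp,
      Real.div_rpow hv.le hu.le, Real.rpow_sub hv, Real.rpow_sub hu, Real.rpow_sub hu, Real.rpow_one,
      Real.rpow_one]
    field_simp
  rw [e1, e2] at h1
  have h2 := ENNReal.rpow_le_rpow h1 hq0.le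
  refine h2.trans (le_of_eq ?_)
  rw [ENNReal.ofReal_rpow_of_pos hv, ENNReal.ofReal_rpow_of_pos (by positivity),
    ← ENNReal.ofReal_mul (by positivity), ← ENNReal.ofReal_mul (by positivity)]
  congr 1
  rw [show C * (v ^ (E / N) * u ^ (1 - E / N) + v ^ (E / N) * u ^ (1 - E / N)) =
    (2 * C) * v ^ (E / N) * u ^ (1 - E / N) by ring, Real.mul_rpow (by positivity) (by positivity),
    Real.mul_rpow (by positivity) (by positivity), ← Real.rpow_mul hv.le, ← Real.rpow_mul hu.le]
  have e3 : E / N * q = q - 1 := by rw [hq]; field_simp; ring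
  have e4 : (1 - E / N) * q = 1 := by rw [hq]; field_simp
  rw [e3, e4, Real.rpow_one]

lemma stepD {n : ℕ} (hn : 1 ≤ n) {p : ℝ} (hp : 0 < p) {f : Euc n → ℝ} (hf : Measurable f)
    {c : Euc n} {R : ℝ} (hR : 0 < R) {a b M q : ℝ} (ha : 0 ≤ a) (hab' : a < b)
    (hab : b < a + n) (hM : 1 ≤ M)
    (hθ : cA n p * M ^ (-a) * (om n * (8 * M) ^ (n : ℝ)) ≤ 1 / 2)
    (hq : q = n / (n - (b - a))) :
    ∫⁻ x in Metric.ball c R, (∫⁻ y in Metric.ball c R, KK p f a x y) ^ q ≤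
      ENNReal.ofReal ((2 * (2 + 2 * (cA n p * M ^ (n : ℝ) * 2 ^ b))) ^ q) *
        (∫⁻ x in Metric.ball c R, ∫⁻ y in Metric.ball c R, KK p f b x y) ^ q := by
  have hA := cA_pos n p
  have hM0 : 0 < M := by linarith
  have hn0 : (0 : ℝ) < n := by exact_mod_cast hn
  have hq1 : 1 < q := by rw [hq, one_lt_div (by linarith)]; linarith
  set B := Metric.ball c R with hBdef
  have hB : MeasurableSet B := measurableSet_ball
  set G := ∫⁻ y in B, ∫⁻ z in B, KK p f b y z with hG
  set C := 2 + 2 * (cA n p * M ^ (n : ℝ) * 2 ^ b) with hC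
  have hCpos : 0 < C := by positivity
  have hmeas : Measurable fun y => ∫⁻ z in B, KK p f b y z :=
    Measurable.lintegral_prod_right' (KK_meas p f hf b)
  by_cases hGtop : G = ⊤
  · rw [hGtop, ENNReal.top_rpow_of_pos (by linarith), ENNReal.mul_top]
    · exact le_top
    · simp only [ne_eq, ENNReal.ofReal_eq_zero, not_le]; positivity
  have hae1 : ∀ᵐ x ∂(volume.restrict B), ∫⁻ z in B, KK p f b x z < ⊤ :=
    ae_lt_top hmeas hGtop
  have hae2 : ∀ᵐ x ∂(volume.restrict B), G = 0 → ∫⁻ z in B, KK p f b x z = 0 := by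
    by_cases h0 : G = 0
    · have := (lintegral_eq_zero_iff hmeas).1 h0
      filter_upwards [this] with x hx _ using hx
    · exact Filter.Eventually.of_forall fun x h => absurd h h0
  calc _ ≤ ∫⁻ x in B, ENNReal.ofReal ((2 * C) ^ q) * G ^ (q - 1) * ∫⁻ z in B, KK p f b x z := by
        apply lintegral_mono_ae
        filter_upwards [hae1, hae2, ae_restrict_mem hB] with x h1 h2 hx
        by_cases hg0 : ∫⁻ z in B, KK p f b x z = 0
        · have := KK_cmp (f := f) hp hx hab'.le
          rw [hg0, mul_zero] at this
          rw [nonpos_iff_eq_zero.1 this, ENNReal.zero_rpow_of_pos (by linarith)]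
          exact zero_le
        · rw [hq]
          refine opt hCpos (by linarith) (by linarith) hg0 h1.ne (fun h => hg0 (h2 h)) hGtop ?_
          intro r hr
          exact stepC hn hp hf hR hx ha hab'.le hab.le hr hM hθ h1.ne
    _ = ENNReal.ofReal ((2 * C) ^ q) * G ^ (q - 1) * G := by
        rw [lintegral_const_mul _ hmeas]
    _ = _ := by
        rw [mul_assoc]
        congr 1
        nth_rewrite 2 [← ENNReal.rpow_one G]
        rw [← ENNReal.rpow_add_of_nonneg _ _ (by linarith) (by norm_num)]
        congr 1; ring

lemma JJ_meas_right {n : ℕ} (p : ℝ) (f : Euc n → ℝ) (hf : Measurable f) (a : ℝ) (B : Set (Euc n))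
    (L : ℝ) (x : Euc n) : Measurable (fun y : Euc n => JJ p f a B L x y) := by
  unfold JJ
  apply Measurable.lintegral_prod_right' (ν := volume.restrict B)
    (f := fun w : Euc n × Euc n =>
      if ‖x - w.1‖ ≤ L * ‖x - w.2‖ then KK p f a x w.2 else 0)
  refine Measurable.ite (measurableSet_le (by fun_prop) (by fun_prop)) ?_ measurable_const
  unfold KK; fun_prop

set_option maxHeartbeats 1000000 in
lemma ptE {n : ℕ} (hn : 1 ≤ n) {p : ℝ} (hp : 0 < p) {f : Euc n → ℝ} (hf : Measurable f)
    {c : Euc n} {R : ℝ} (hR : 0 < R) {x y : Euc n}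
    (hx : x ∈ Metric.ball c R) (hy : y ∈ Metric.ball c R) {a s q : ℝ} (hs : 0 < s)
    (hq : 1 ≤ q) (ha : a = n + s * p) :
    ENNReal.ofReal (|f x - f y| ^ (p * q) / ‖x - y‖ ^ ((n : ℝ) + s * (p * q))) ≤
      ENNReal.ofReal ((cA n p * 2 ^ a) ^ q * 2 ^ (q - 1) * 2 ^ (n : ℝ)) *
      ((∫⁻ z in Metric.ball c R, KK p f a x z) ^ (q - 1) *
          JJ p f (a + n) (Metric.ball c R) 8 x y +
        (∫⁻ z in Metric.ball c R, KK p f a y z) ^ (q - 1) *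
          JJ p f (a + n) (Metric.ball c R) 8 y x) := by
  have hA := cA_pos n p
  have hq0 : 0 < q := by linarith
  rcases eq_or_ne x y with rfl | hxy
  · simp [Real.zero_rpow (mul_pos hp hq0).ne']
  have hn0 : (0 : ℝ) ≤ n := by positivity
  have ha0 : 0 ≤ a := by rw [ha]; positivity
  set ρ := ‖x - y‖ with hρ
  have hρ0 : 0 < ρ := norm_pos_iff.2 (sub_ne_zero.2 hxy)
  have hρR : ρ ≤ 2 * R := by
    rw [hρ, ← dist_eq_norm]
    have := dist_triangle_right x y c
    rw [Metric.mem_ball] at hx hy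
    linarith
  set B := Metric.ball c R
  have hB : MeasurableSet B := measurableSet_ball
  set S := DD x y ρ ∩ B with hSdef
  have hS : MeasurableSet S := (DD_meas x y ρ).inter hB
  have hzx : ∀ z ∈ S, ‖x - z‖ ≤ 2 * ρ := fun z hz => by linarith [hz.1.2.1]
  have hzy : ∀ z ∈ S, ‖y - z‖ ≤ 2 * ρ := fun z hz => by
    calc ‖y - z‖ = ‖(x - z) - (x - y)‖ := by congr 1; abel
      _ ≤ ‖x - z‖ + ρ := norm_sub_le _ _
      _ ≤ 2 * ρ := by linarith [hz.1.2.1]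
  -- general facts for a base point w
  have key : ∀ w v : Euc n, ‖w - v‖ = ρ → (∀ z ∈ S, ‖w - z‖ ≤ 2 * ρ) →
      (∀ z ∈ S, ρ / 8 ≤ ‖w - z‖) →
      (∫⁻ z in S, KK p f 0 w z ≤ ENNReal.ofReal ((2 * ρ) ^ a) * ∫⁻ z in S, KK p f a w z) ∧
      ENNReal.ofReal (ρ ^ (-(n : ℝ))) * (∫⁻ z in S, KK p f a w z) ^ q ≤
        ENNReal.ofReal (2 ^ (n : ℝ)) *
        ((∫⁻ z in B, KK p f a w z) ^ (q - 1) * JJ p f (a + n) B 8 w v) := by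
    intro w v hwv h1 h2
    constructor
    · rw [← lintegral_const_mul' _ _ ENNReal.ofReal_ne_top]
      refine setLIntegral_mono' hS fun z hz => ?_
      simpa using KK_mono hp f (a := 0) (b := a) ha0 (h1 z hz)
    · have h3 : ∫⁻ z in S, KK p f a w z ≤ ENNReal.ofReal ((2 * ρ) ^ (n : ℝ)) *
          JJ p f (a + n) B 8 w v := by
        unfold JJ
        rw [← lintegral_const_mul' _ _ ENNReal.ofReal_ne_top]
        refine (setLIntegral_mono' hS fun z hz => ?_).trans
          (lintegral_mono_set Set.inter_subset_right)
        rw [if_pos (by rw [hwv]; linarith [h2 z hz])]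
        simpa using KK_mono hp f (a := a) (b := a + n) (by linarith) (h1 z hz)
      have h4 : (∫⁻ z in S, KK p f a w z) ^ q ≤ (∫⁻ z in B, KK p f a w z) ^ (q - 1) *
          ∫⁻ z in S, KK p f a w z := by
        calc (∫⁻ z in S, KK p f a w z) ^ q =
            (∫⁻ z in S, KK p f a w z) ^ (q - 1) * (∫⁻ z in S, KK p f a w z) ^ (1 : ℝ) := by
              rw [← ENNReal.rpow_add_of_nonneg _ _ (by linarith) (by norm_num)]
              congr 1; ring
          _ ≤ _ := by
              rw [ENNReal.rpow_one]
              gcongr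
              exact Set.inter_subset_right
      calc _ ≤ ENNReal.ofReal (ρ ^ (-(n : ℝ))) * ((∫⁻ z in B, KK p f a w z) ^ (q - 1) *
            (ENNReal.ofReal ((2 * ρ) ^ (n : ℝ)) * JJ p f (a + n) B 8 w v)) := by
            gcongr
            exact h4.trans (by gcongr)
        _ = (ENNReal.ofReal (ρ ^ (-(n : ℝ))) * ENNReal.ofReal ((2 * ρ) ^ (n : ℝ))) *
            ((∫⁻ z in B, KK p f a w z) ^ (q - 1) * JJ p f (a + n) B 8 w v) := by ring
        _ = _ := by
            rw [← ENNReal.ofReal_mul (by positivity)]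
            congr 2
            rw [Real.mul_rpow (by norm_num) hρ0.le, Real.rpow_neg hρ0.le]
            field_simp
  obtain ⟨kx1, kx2⟩ := key x y rfl hzx fun z hz => hz.1.1
  obtain ⟨ky1, ky2⟩ := key y x (norm_sub_rev _ _) hzy fun z hz => hz.1.2.2
  set Ex := ∫⁻ z in S, KK p f a x z
  set Ey := ∫⁻ z in S, KK p f a y z
  have h0 : KK p f 0 x y ≤ ENNReal.ofReal (cA n p * 2 ^ a * ρ ^ (s * p)) * (Ex + Ey) := by
    calc _ ≤ _ := avg hn hp hf hR hx y hρ0 hρR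
      _ ≤ ENNReal.ofReal (cA n p * ρ ^ (-(n : ℝ))) *
          (ENNReal.ofReal ((2 * ρ) ^ a) * Ex + ENNReal.ofReal ((2 * ρ) ^ a) * Ey) := by
          simp_rw [KK_symm p f 0 _ y]
          exact mul_le_mul' le_rfl (add_le_add kx1 ky1)
      _ = _ := by
          rw [← mul_add, ← mul_assoc, ← ENNReal.ofReal_mul (by positivity)]
          congr 2
          rw [Real.mul_rpow (by norm_num) hρ0.le]
          have : ρ ^ (-(n : ℝ)) * ρ ^ a = ρ ^ (s * p) := by
            rw [← Real.rpow_add hρ0]; congr 1; rw [ha]; ring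
          rw [← this]; ring
  have hT : ENNReal.ofReal (|f x - f y| ^ (p * q) / ρ ^ ((n : ℝ) + s * (p * q))) =
      ENNReal.ofReal (ρ ^ (-(n : ℝ)) * ρ ^ (-(s * p * q))) * KK p f 0 x y ^ q := by
    unfold KK
    rw [ENNReal.ofReal_rpow_of_nonneg (by positivity) hq0.le, ← ENNReal.ofReal_mul (by positivity)]
    congr 1
    rw [Real.rpow_zero, div_one, ← Real.rpow_mul (abs_nonneg _), ← Real.rpow_add hρ0,
      show -(n : ℝ) + -(s * p * q) = -(n + s * (p * q)) by ring, Real.rpow_neg hρ0.le]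
    field_simp
  rw [hT]
  calc _ ≤ ENNReal.ofReal (ρ ^ (-(n : ℝ)) * ρ ^ (-(s * p * q))) *
        (ENNReal.ofReal (cA n p * 2 ^ a * ρ ^ (s * p)) * (Ex + Ey)) ^ q := by gcongr
    _ = ENNReal.ofReal (cA n p * 2 ^ a) ^ q *
        (ENNReal.ofReal (ρ ^ (-(n : ℝ))) * (Ex + Ey) ^ q) := by
        rw [ENNReal.mul_rpow_of_nonneg _ _ hq0.le, ← mul_assoc, ← mul_assoc]
        congr 1
        rw [ENNReal.ofReal_rpow_of_nonneg (by positivity) hq0.le,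
          ENNReal.ofReal_rpow_of_nonneg (by positivity) hq0.le, ← ENNReal.ofReal_mul (by positivity),
          ← ENNReal.ofReal_mul (by positivity)]
        congr 1
        rw [Real.mul_rpow (x := cA n p * 2 ^ a) (by positivity) (by positivity),
          ← Real.rpow_mul hρ0.le, Real.rpow_neg hρ0.le (s * p * q)]
        field_simp
    _ ≤ ENNReal.ofReal (cA n p * 2 ^ a) ^ q *
        (ENNReal.ofReal (ρ ^ (-(n : ℝ))) * (2 ^ (q - 1) * (Ex ^ q + Ey ^ q))) := by
        gcongr
        exact ENNReal.rpow_add_le_mul_rpow_add_rpow _ _ hq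
    _ = ENNReal.ofReal (cA n p * 2 ^ a) ^ q * 2 ^ (q - 1) *
        (ENNReal.ofReal (ρ ^ (-(n : ℝ))) * Ex ^ q + ENNReal.ofReal (ρ ^ (-(n : ℝ))) * Ey ^ q) := by
        ring
    _ ≤ ENNReal.ofReal (cA n p * 2 ^ a) ^ q * 2 ^ (q - 1) *
        (ENNReal.ofReal (2 ^ (n : ℝ)) *
          ((∫⁻ z in B, KK p f a x z) ^ (q - 1) * JJ p f (a + n) B 8 x y) +
        ENNReal.ofReal (2 ^ (n : ℝ)) *
          ((∫⁻ z in B, KK p f a y z) ^ (q - 1) * JJ p f (a + n) B 8 y x)) :=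
        mul_le_mul' le_rfl (add_le_add kx2 ky2)
    _ = _ := by
        rw [← mul_add, ← mul_assoc]
        congr 1
        rw [ENNReal.ofReal_rpow_of_nonneg (by positivity) hq0.le,
          show (2 : ℝ≥0∞) = ENNReal.ofReal 2 by simp,
          ENNReal.ofReal_rpow_of_pos (by norm_num), ← ENNReal.ofReal_mul (by positivity),
          ← ENNReal.ofReal_mul (by positivity)]

set_option maxHeartbeats 1000000 in
lemma stepE {n : ℕ} (hn : 1 ≤ n) {p : ℝ} (hp : 0 < p) {f : Euc n → ℝ} (hf : Measurable f)
    {c : Euc n} {R : ℝ} (hR : 0 < R) {a s q : ℝ} (hs : 0 < s)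
    (hq : 1 ≤ q) (ha : a = n + s * p) :
    ∫⁻ x in Metric.ball c R, ∫⁻ y in Metric.ball c R,
      ENNReal.ofReal (|f x - f y| ^ (p * q) / ‖x - y‖ ^ ((n : ℝ) + s * (p * q))) ≤
      ENNReal.ofReal ((cA n p * 2 ^ a) ^ q * 2 ^ (q - 1) * 2 ^ (n : ℝ) *
        (2 * (om n * 8 ^ (n : ℝ)))) *
      ∫⁻ x in Metric.ball c R, (∫⁻ y in Metric.ball c R, KK p f a x y) ^ q := by
  have hA := cA_pos n p
  have ho := om_pos n
  set B := Metric.ball c R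
  have hB : MeasurableSet B := measurableSet_ball
  set C1 := (cA n p * 2 ^ a) ^ q * 2 ^ (q - 1) * 2 ^ (n : ℝ) with hC1
  have hC1p : 0 < C1 := by positivity
  set W : Euc n → Euc n → ℝ≥0∞ := fun x y =>
    (∫⁻ z in B, KK p f a x z) ^ (q - 1) * JJ p f (a + n) B 8 x y with hW
  have hHm : Measurable fun x => ∫⁻ z in B, KK p f a x z :=
    Measurable.lintegral_prod_right' (KK_meas p f hf a)
  have hWm : Measurable (Function.uncurry W) := by
    refine Measurable.mul ?_ (JJ_meas p f hf (a + n) B 8)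
    exact (hHm.comp measurable_fst).pow_const _
  have hWi : ∫⁻ x in B, ∫⁻ y in B, W x y ≤ ENNReal.ofReal (om n * 8 ^ (n : ℝ)) *
      ∫⁻ x in B, (∫⁻ y in B, KK p f a x y) ^ q := by
    rw [← lintegral_const_mul' _ _ ENNReal.ofReal_ne_top]
    apply lintegral_mono
    intro x
    have hJm : Measurable fun y => JJ p f (a + n) B 8 x y :=
      JJ_meas_right p f hf (a + n) B 8 x
    have hJ := JJ_int hp hf a (B := B) 8 (by norm_num) 0 x
    have hs1 : {y : Euc n | 0 ≤ ‖x - y‖} ∩ B = B := by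
      ext y; simp
    rw [hs1] at hJ
    calc ∫⁻ y in B, W x y = (∫⁻ z in B, KK p f a x z) ^ (q - 1) *
        ∫⁻ y in B, JJ p f (a + n) B 8 x y := by rw [hW, lintegral_const_mul _ hJm]
      _ ≤ (∫⁻ z in B, KK p f a x z) ^ (q - 1) *
        (ENNReal.ofReal (om n * 8 ^ (n : ℝ)) * ∫⁻ z in B, KK p f a x z) := by
          gcongr
          refine hJ.trans ?_
          gcongr
          exact Set.inter_subset_right
      _ = ENNReal.ofReal (om n * 8 ^ (n : ℝ)) * ((∫⁻ z in B, KK p f a x z) ^ (q - 1) *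
          (∫⁻ z in B, KK p f a x z) ^ (1 : ℝ)) := by rw [ENNReal.rpow_one]; ring
      _ = _ := by
          rw [← ENNReal.rpow_add_of_nonneg _ _ (by linarith) (by norm_num)]
          congr 2; ring
  have hpt : ∀ x ∈ B, ∀ y ∈ B,
      ENNReal.ofReal (|f x - f y| ^ (p * q) / ‖x - y‖ ^ ((n : ℝ) + s * (p * q))) ≤
      ENNReal.ofReal C1 * (W x y + W y x) :=
    fun x hx y hy => ptE hn hp hf hR hx hy hs hq ha
  have hWr : ∀ x, Measurable fun y => W x y := fun x =>
    (JJ_meas_right p f hf (a + n) B 8 x).const_mul _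
  clear_value W C1
  have hWs : ∫⁻ x in B, ∫⁻ y in B, W y x = ∫⁻ x in B, ∫⁻ y in B, W x y :=
    lintegral_lintegral_swap (hWm.comp measurable_swap).aemeasurable
  calc _ ≤ ∫⁻ x in B, ∫⁻ y in B, ENNReal.ofReal C1 * (W x y + W y x) := by
        refine setLIntegral_mono' hB fun x hx => setLIntegral_mono' hB fun y hy => ?_
        exact hpt x hx y hy
    _ = ENNReal.ofReal C1 * ((∫⁻ x in B, ∫⁻ y in B, W x y) + ∫⁻ x in B, ∫⁻ y in B, W y x) := by
        rw [← lintegral_add_left, ← lintegral_const_mul' _ _ ENNReal.ofReal_ne_top]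
        · refine lintegral_congr fun x => ?_
          rw [lintegral_const_mul' _ _ ENNReal.ofReal_ne_top, lintegral_add_left]
          exact hWr x
        · exact Measurable.lintegral_prod_right' hWm
    _ ≤ ENNReal.ofReal C1 * (2 * (ENNReal.ofReal (om n * 8 ^ (n : ℝ)) *
      ∫⁻ x in B, (∫⁻ y in B, KK p f a x y) ^ q)) := by
        rw [hWs, ← two_mul]; gcongr
    _ = _ := by
        rw [ENNReal.ofReal_mul hC1p.le, ENNReal.ofReal_mul (p := 2) (by norm_num)]
        simp only [ENNReal.ofReal_ofNat]
        ring

lemma exhaust {n : ℕ} (K : Euc n → Euc n → ℝ≥0∞) (hK : Measurable (Function.uncurry K)) {q : ℝ}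
    (hq : 0 < q) (T : ℝ≥0∞)
    (h : ∀ R : ℝ, 0 < R → ∫⁻ x in Metric.ball (0 : Euc n) R,
      (∫⁻ y in Metric.ball (0 : Euc n) R, K x y) ^ q ≤ T) :
    ∫⁻ x, (∫⁻ y, K x y) ^ q ≤ T := by
  set B : ℕ → Set (Euc n) := fun k => Metric.ball (0 : Euc n) (k + 1) with hBd
  have hB : ∀ k, MeasurableSet (B k) := fun k => measurableSet_ball
  have hBm : Monotone B := fun i j hij => Metric.ball_subset_ball (by gcongr)
  have hBu : ⋃ k, B k = Set.univ := by
    rw [Set.eq_univ_iff_forall]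
    intro x
    obtain ⟨k, hk⟩ := exists_nat_gt ‖x‖
    rw [Set.mem_iUnion]
    refine ⟨k, ?_⟩
    rw [hBd]
    simp only [Metric.mem_ball, dist_zero_right]
    linarith
  have hmem : ∀ x, ∀ᶠ k in Filter.atTop, x ∈ B k := by
    intro x
    have : x ∈ ⋃ k, B k := by rw [hBu]; trivial
    obtain ⟨k, hk⟩ := Set.mem_iUnion.1 this
    filter_upwards [Filter.eventually_ge_atTop k] with j hj using hBm hj hk
  have hind : ∀ (g : Euc n → ℝ≥0∞), Measurable g → Filter.Tendsto
      (fun k => ∫⁻ y in B k, g y) Filter.atTop (nhds (∫⁻ y, g y)) := by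
    intro g hg
    simp_rw [← lintegral_indicator (hB _)]
    apply lintegral_tendsto_of_tendsto_of_monotone
    · exact fun k => (hg.indicator (hB k)).aemeasurable
    · refine Filter.Eventually.of_forall fun x i j hij => ?_
      exact Set.indicator_le_indicator_of_subset (hBm hij) (fun _ => zero_le) x
    · refine Filter.Eventually.of_forall fun x => ?_
      apply tendsto_const_nhds.congr'
      filter_upwards [hmem x] with k hk
      rw [Set.indicator_of_mem hk]
  have hKx : ∀ x, Measurable (K x) := fun x => hK.comp measurable_prodMk_left
  have hmeas : ∀ k, Measurable fun x => ∫⁻ y in B k, K x y := fun k =>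
    Measurable.lintegral_prod_right' hK
  have hlim : Filter.Tendsto (fun k => ∫⁻ x, (B k).indicator (fun x => (∫⁻ y in B k, K x y) ^ q) x)
      Filter.atTop (nhds (∫⁻ x, (∫⁻ y, K x y) ^ q)) := by
    apply lintegral_tendsto_of_tendsto_of_monotone
    · exact fun k => (((hmeas k).pow_const q).indicator (hB k)).aemeasurable
    · refine Filter.Eventually.of_forall fun x i j hij => ?_
      refine (Set.indicator_le_indicator_of_subset (hBm hij) (fun _ => zero_le) x).trans ?_
      refine Set.indicator_le_indicator ?_
      exact ENNReal.rpow_le_rpow (lintegral_mono_set (hBm hij)) hq.le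
    · refine Filter.Eventually.of_forall fun x => ?_
      have := ((ENNReal.continuous_rpow_const (y := q)).tendsto _).comp (hind (K x) (hKx x))
      refine this.congr' ?_
      filter_upwards [hmem x] with k hk
      rw [Set.indicator_of_mem hk]; rfl
  refine le_of_tendsto' hlim fun k => ?_
  rw [lintegral_indicator (hB k)]
  exact h _ (by positivity)

lemma fin_root {X G : ℝ≥0∞} {A C p q : ℝ} (hA : 0 < A) (hp : 0 < p) (hq : 0 < q)
    (hC : A ^ (1 / (p * q)) ≤ C)
    (h : X ≤ ENNReal.ofReal A * G ^ q) :
    X ^ (1 / (p * q)) ≤ ENNReal.ofReal C * G ^ (1 / p) := by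
  have h0 : 0 < 1 / (p * q) := by positivity
  calc X ^ (1 / (p * q)) ≤ (ENNReal.ofReal A * G ^ q) ^ (1 / (p * q)) :=
        ENNReal.rpow_le_rpow h h0.le
    _ = ENNReal.ofReal (A ^ (1 / (p * q))) * G ^ (1 / p) := by
        rw [ENNReal.mul_rpow_of_nonneg _ _ h0.le, ENNReal.ofReal_rpow_of_pos hA, ← ENNReal.rpow_mul]
        congr 2
        field_simp
    _ ≤ _ := by gcongr

/-- Sobolev-type embeddings for Gagliardo seminorms, on `ℝⁿ` and on balls. -/
theorem stmt8 (n : ℕ) (hn : 1 ≤ n) (s t p pstar : ℝ)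
    (hs : 0 < s) (hst : s < t) (ht : t < 1) (hp : 1 < p) (hpstar : 1 < pstar)
    (hrel : s - n / pstar = t - n / p) :
    ∃ C : ℝ, 0 < C ∧
      -- (1) and (2): on all of ℝⁿ
      (∀ f : Euc n → ℝ, Measurable f →
        gagliardo n s pstar Set.univ f ≤ ENNReal.ofReal C * gagliardo n t p Set.univ f) ∧
      (∀ f : Euc n → ℝ, Measurable f →
        (∫⁻ x, (∫⁻ y, ENNReal.ofReal (|f x - f y| ^ p / ‖x - y‖ ^ ((n : ℝ) + s * p)))
              ^ (pstar / p)) ^ (1 / pstar)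
          ≤ ENNReal.ofReal C * gagliardo n t p Set.univ f) ∧
      -- (3) and (4): on balls, with the same constant
      (∀ (z : Euc n) (R : ℝ), 0 < R → ∀ f : Euc n → ℝ, Measurable f →
        gagliardo n s pstar (Metric.ball z R) f
          ≤ ENNReal.ofReal C * gagliardo n t p (Metric.ball z R) f) ∧
      (∀ (z : Euc n) (R : ℝ), 0 < R → ∀ f : Euc n → ℝ, Measurable f →
        (∫⁻ x in Metric.ball z R,
            (∫⁻ y in Metric.ball z R,
              ENNReal.ofReal (|f x - f y| ^ p / ‖x - y‖ ^ ((n : ℝ) + s * p)))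
              ^ (pstar / p)) ^ (1 / pstar)
          ≤ ENNReal.ofReal C * gagliardo n t p (Metric.ball z R) f) := by
  have hn0 : (0 : ℝ) < n := by exact_mod_cast hn
  have hp0 : 0 < p := by linarith
  have hps0 : 0 < pstar := by linarith
  have hA := cA_pos n p
  have ho := om_pos n
  obtain ⟨q, hq⟩ : ∃ q, q = pstar / p := ⟨_, rfl⟩
  have hpq : pstar = p * q := by rw [hq]; field_simp
  have hq0 : 0 < q := by rw [hq]; positivity
  obtain ⟨a, ha⟩ : ∃ a : ℝ, a = n + s * p := ⟨_, rfl⟩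
  obtain ⟨b, hb⟩ : ∃ b : ℝ, b = n + t * p := ⟨_, rfl⟩
  have hab' : a < b := by rw [ha, hb]; gcongr
  have hrel2 : n - (b - a) = n / q := by
    rw [ha, hb, hq]
    field_simp at hrel ⊢
    linarith
  have hnq : 0 < n / q := by positivity
  have hab : b < a + n := by linarith
  have hqeq : q = n / (n - (b - a)) := by rw [hrel2]; field_simp
  have hq1 : 1 < q := by rw [hqeq, one_lt_div (by linarith)]; linarith
  have ha0 : 0 ≤ a := by rw [ha]; positivity
  have hsp : 0 < s * p := by positivity
  -- choice of M
  obtain ⟨M, hM, hθ⟩ : ∃ M : ℝ, 1 ≤ M ∧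
      cA n p * M ^ (-a) * (om n * (8 * M) ^ (n : ℝ)) ≤ 1 / 2 := by
    have hlim : Filter.Tendsto (fun M : ℝ => cA n p * om n * 8 ^ (n : ℝ) * M ^ (-(s * p)))
        Filter.atTop (nhds (cA n p * om n * 8 ^ (n : ℝ) * 0)) :=
      (tendsto_rpow_neg_atTop hsp).const_mul _
    rw [mul_zero] at hlim
    have h1 := hlim.eventually_le_const (show (0 : ℝ) < 1 / 2 by norm_num)
    obtain ⟨M, hM1, hM2⟩ := (h1.and (Filter.eventually_ge_atTop 1)).exists
    refine ⟨M, hM2, le_trans (le_of_eq ?_) hM1⟩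
    have hM0 : 0 < M := by linarith
    have : M ^ (-(s * p)) = M ^ (-a) * M ^ (n : ℝ) := by
      rw [← Real.rpow_add hM0, ha]; congr 1; ring
    rw [this, Real.mul_rpow (by norm_num) hM0.le]; ring
  have hM0 : 0 < M := by linarith
  set A1 := (2 * (2 + 2 * (cA n p * M ^ (n : ℝ) * 2 ^ b))) ^ q with hA1
  have hA1p : 0 < A1 := by positivity
  set A2 := (cA n p * 2 ^ a) ^ q * 2 ^ (q - 1) * 2 ^ (n : ℝ) * (2 * (om n * 8 ^ (n : ℝ))) with hA2
  have hA2p : 0 < A2 := by positivity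
  -- the two basic estimates on balls
  have key4 : ∀ (z : Euc n) (R : ℝ), 0 < R → ∀ f : Euc n → ℝ, Measurable f →
      ∫⁻ x in Metric.ball z R, (∫⁻ y in Metric.ball z R, KK p f a x y) ^ q ≤
        ENNReal.ofReal A1 *
        (∫⁻ x in Metric.ball z R, ∫⁻ y in Metric.ball z R, KK p f b x y) ^ q :=
    fun z R hR f hf => stepD hn hp0 hf hR ha0 hab' hab hM hθ hqeq
  have key3 : ∀ (z : Euc n) (R : ℝ), 0 < R → ∀ f : Euc n → ℝ, Measurable f →
      ∫⁻ x in Metric.ball z R, ∫⁻ y in Metric.ball z R, KK (p * q) f (n + s * (p * q)) x y ≤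
        ENNReal.ofReal (A2 * A1) *
        (∫⁻ x in Metric.ball z R, ∫⁻ y in Metric.ball z R, KK p f b x y) ^ q := by
    intro z R hR f hf
    refine (stepE hn hp0 hf hR hs hq1.le ha).trans ?_
    rw [ENNReal.ofReal_mul hA2p.le, mul_assoc (ENNReal.ofReal A2)]
    exact mul_le_mul_right (key4 z R hR f hf) _
  have hsub : ∀ (R : ℝ) (f : Euc n → ℝ),
      (∫⁻ x in Metric.ball (0 : Euc n) R, ∫⁻ y in Metric.ball (0 : Euc n) R, KK p f b x y) ^ q ≤
      (∫⁻ x, ∫⁻ y, KK p f b x y) ^ q := by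
    intro R f
    refine ENNReal.rpow_le_rpow ?_ hq0.le
    exact (setLIntegral_le_lintegral _ _).trans
      (lintegral_mono fun x => setLIntegral_le_lintegral _ _)
  clear_value A1 A2
  refine ⟨A1 ^ (1 / (p * q)) + (A2 * A1) ^ (1 / (p * q)), by positivity, ?_, ?_, ?_, ?_⟩
  · intro f hf
    unfold gagliardo
    rw [hpq, ← hb]
    simp only [Measure.restrict_univ]
    refine fin_root (A := A2 * A1) (by positivity) hp0 hq0 (by linarith [Real.rpow_nonneg hA1p.le (1 / (p * q))]) ?_
    have := exhaust (fun x y => KK (p * q) f (n + s * (p * q)) x y) (KK_meas _ f hf _) one_pos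
      (ENNReal.ofReal (A2 * A1) * (∫⁻ x, ∫⁻ y, KK p f b x y) ^ q) ?_
    · simp only [ENNReal.rpow_one] at this
      exact this
    · intro R hR
      simp only [ENNReal.rpow_one]
      exact (key3 0 R hR f hf).trans (mul_le_mul_right (hsub R f) _)
  · intro f hf
    unfold gagliardo
    rw [← hq, hpq, ← hb, ← ha]
    simp only [Measure.restrict_univ]
    refine fin_root (A := A1) (by positivity) hp0 hq0
      (by linarith [Real.rpow_nonneg (mul_pos hA2p hA1p).le (1 / (p * q))]) ?_
    refine exhaust (fun x y => KK p f a x y) (KK_meas _ f hf _) hq0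
      (ENNReal.ofReal A1 * (∫⁻ x, ∫⁻ y, KK p f b x y) ^ q) ?_
    intro R hR
    exact (key4 0 R hR f hf).trans (mul_le_mul_right (hsub R f) _)
  · intro z R hR f hf
    unfold gagliardo
    rw [hpq, ← hb]
    exact fin_root (A := A2 * A1) (by positivity) hp0 hq0
      (by linarith [Real.rpow_nonneg hA1p.le (1 / (p * q))]) (key3 z R hR f hf)
  · intro z R hR f hf
    unfold gagliardo
    rw [← hq, hpq, ← hb, ← ha]
    exact fin_root (A := A1) (by positivity) hp0 hq0
      (by linarith [Real.rpow_nonneg (mul_pos hA2p hA1p).le (1 / (p * q))]) (key4 z R hR f hf)
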